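/- Let ∼ be an equivalence relation on Ω with partition 𝒫, and define a relation ≈ on Ω by: α ≈ β if and only if αη ∼ βη for all but finitely many words η. Then ≈ is a coherent and reduced equivalence relation on Ω; if ∼ is coherent then α ∼ β implies α ≈ β; and, writing 𝒬 for the type system determined by ≈, one has Fix_V(𝒬) = Fix_V(𝒫) and Stab_V(𝒫) ≤ Stab_V(𝒬). -/

import Mathlib

/-!
An infinite word determines the address it is prepended by, so `α ^ g` is unique; and if
`α ^ g = β`, then `(αη) ^ g = βη` for every `η`.

The relation `≈` is a cofinite condition, and `Ω` is covered, up to finitely many addresses, by the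
sets `αΩ` with `α` ranging over the finitely many addresses of length `N`. For `N = 1` this says
that `α ≈ β` if and only if `αb ≈ βb` for both letters `b`, which is coherence and reducedness at
once. For large `N` it says that a property holds at almost all addresses as soon as, for almost all
`α`, it holds at `αη` for almost all `η`. Applied to the property "`g` fixes the type of the
address", this identifies the elements fixing the parts of `≈` with those fixing the parts of `∼`.
-/

/-- Addresses: finite words over the alphabet `{0,1}` (`Bool`). -/
abbrev Addr : Type := List Bool

/-- Cantor space: infinite words over the alphabet `{0,1}`. -/
abbrev Cantor : Type := ℕ → Bool

/-- Prepend the finite word `α` to the infinite word `w`. -/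
def wcat (α : Addr) (w : Cantor) : Cantor := fun n =>
  if h : n < α.length then α.get ⟨n, h⟩ else w (n - α.length)

/-- The cone of the address `α`: the set of infinite words having `α` as a prefix. -/
def cone (α : Addr) : Set Cantor := Set.range (wcat α)

/-- `g` is a prefix substitution map: there are partitions of Cantor space into cones
`(A i)𝔠` and `(B i)𝔠` such that `g` maps `(A i) w` to `(B i) w`. -/
def IsPrefixSubst (g : Equiv.Perm Cantor) : Prop :=
  ∃ (n : ℕ) (A B : Fin n → Addr),
    (∀ i j, i ≠ j → Disjoint (cone (A i)) (cone (A j))) ∧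
    (⋃ i, cone (A i)) = Set.univ ∧
    (∀ i j, i ≠ j → Disjoint (cone (B i)) (cone (B j))) ∧
    (⋃ i, cone (B i)) = Set.univ ∧
    (∀ i w, g (wcat (A i) w) = wcat (B i) w)

/-- Thompson's group `V`, as the set of prefix substitution maps inside `Equiv.Perm Cantor`. -/
def VSet : Set (Equiv.Perm Cantor) := { g | IsPrefixSubst g }

/-- `α ^ g = β` : `g` maps the cone of `α` onto the cone of `β` by the prefix
substitution `α ↦ β`. -/
def actsOn (g : Equiv.Perm Cantor) (α β : Addr) : Prop :=
  ∀ w, g (wcat α w) = wcat β w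

/-- A subset of `Equiv.Perm Cantor` that is closed under the group operations. -/
def IsSubgroupSet (M : Set (Equiv.Perm Cantor)) : Prop :=
  (1 : Equiv.Perm Cantor) ∈ M ∧ (∀ g ∈ M, ∀ h ∈ M, g * h ∈ M) ∧ ∀ g ∈ M, g⁻¹ ∈ M

/-- `M` is a maximal subgroup of Thompson's group `V`. -/
def IsMaximalSubgroupOfV (M : Set (Equiv.Perm Cantor)) : Prop :=
  IsSubgroupSet M ∧ M ⊆ VSet ∧ M ≠ VSet ∧
    ∀ H : Set (Equiv.Perm Cantor),
      IsSubgroupSet H → M ⊆ H → H ⊆ VSet → H = M ∨ H = VSet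

/-- A relation on addresses is coherent if `α ∼ β` implies `α0 ∼ β0` and `α1 ∼ β1`. -/
def Coherent (r : Addr → Addr → Prop) : Prop :=
  ∀ α β, r α β → r (α ++ [false]) (β ++ [false]) ∧ r (α ++ [true]) (β ++ [true])

/-- A relation on addresses is reduced if `α0 ∼ β0` and `α1 ∼ β1` imply `α ∼ β`. -/
def Reduced (r : Addr → Addr → Prop) : Prop :=
  ∀ α β, r (α ++ [false]) (β ++ [false]) → r (α ++ [true]) (β ++ [true]) → r α β

/-- A type system: a coherent and reduced equivalence relation on addresses
(identified with the partition of `Ω` into its classes). -/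
def IsTypeSystem (r : Addr → Addr → Prop) : Prop :=
  Equivalence r ∧ Coherent r ∧ Reduced r

/-- `g` fixes the parts of `r`: for all but finitely many addresses `α`, the image
`α ^ g` is defined and equivalent to `α`. -/
def FixesParts (r : Addr → Addr → Prop) (g : Equiv.Perm Cantor) : Prop :=
  { α : Addr | ¬ ∃ β, actsOn g α β ∧ r α β }.Finite

/-- `g` stabilizes `r`: on some cofinite set of addresses, `α ^ g` is defined and `g`
preserves equivalence and inequivalence of addresses. -/
def Stabilizes (r : Addr → Addr → Prop) (g : Equiv.Perm Cantor) : Prop :=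
  ∃ Ω₀ : Set Addr, Ω₀ᶜ.Finite ∧ (∀ α ∈ Ω₀, ∃ β, actsOn g α β) ∧
    ∀ α ∈ Ω₀, ∀ α' ∈ Ω₀, ∀ β β', actsOn g α β → actsOn g α' β' → (r α α' ↔ r β β')

/-- `Fix_V(𝒫)`: the elements of Thompson's group `V` fixing the parts of `r`. -/
def FixSet (r : Addr → Addr → Prop) : Set (Equiv.Perm Cantor) :=
  { g | IsPrefixSubst g ∧ FixesParts r g }

/-- `Stab_V(𝒫)`: the elements of Thompson's group `V` stabilizing `r`. -/
def StabSet (r : Addr → Addr → Prop) : Set (Equiv.Perm Cantor) :=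
  { g | IsPrefixSubst g ∧ Stabilizes r g }

/-- The type system of `s` is a quotient of that of `r`. -/
def IsQuotientOf (s r : Addr → Addr → Prop) : Prop :=
  IsTypeSystem s ∧ ∀ α β, r α β → s α β

/-- A simple type system: the universal relation is a proper quotient, and every
quotient is either the type system itself or the universal one. -/
def SimpleTS (r : Addr → Addr → Prop) : Prop :=
  IsTypeSystem r ∧ (∃ α β : Addr, ¬ r α β) ∧
    ∀ s : Addr → Addr → Prop, IsQuotientOf s r →
      (∀ α β, s α β ↔ r α β) ∨ ∀ α β, s α β

/-- The type (equivalence class) of the address `α`. -/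
def typeOf (r : Addr → Addr → Prop) (α : Addr) : Set Addr := { β | r α β }

/-- The relation `≈` of Lemma 3.6: `α ≈ β` iff `αη ∼ βη` for all but finitely many
words `η`. -/
def approxRel (r : Addr → Addr → Prop) : Addr → Addr → Prop :=
  fun α β => { η : Addr | ¬ r (α ++ η) (β ++ η) }.Finite

section Words

open Filter

variable {ι : Type*} {p : List ι → Prop}

theorem eventually_cofinite_append (h : ∀ᶠ γ in cofinite, p γ) (α : List ι) :
    ∀ᶠ η in cofinite, p (α ++ η) :=
  (List.append_right_injective α).tendsto_cofinite.eventually h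

theorem exists_forall_le_length_of_eventually_cofinite (h : ∀ᶠ γ in cofinite, p γ) :
    ∃ N : ℕ, ∀ γ : List ι, N ≤ γ.length → p γ := by
  obtain ⟨M, hM⟩ := (Set.Finite.image List.length h).bddAbove
  refine ⟨M + 1, fun γ hγ => ?_⟩
  by_contra hp
  exact hγ.not_gt (Nat.lt_succ_of_le (hM ⟨γ, hp, rfl⟩))

variable [Finite ι]

theorem eventually_cofinite_iff_forall_length_eq (N : ℕ) :
    (∀ᶠ γ in cofinite, p γ) ↔
      ∀ α : List ι, α.length = N → ∀ᶠ η in cofinite, p (α ++ η) := by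
  refine ⟨fun h α _ => eventually_cofinite_append h α, fun h => ?_⟩
  have hshort : {γ : List ι | γ.length < N}.Finite := List.finite_length_lt ι N
  have hlong : (⋃ α ∈ {α : List ι | α.length = N}, (α ++ ·) '' {η | ¬p (α ++ η)}).Finite :=
    (List.finite_length_eq ι N).biUnion fun α hα => (h α hα).image _
  refine (hshort.union hlong).subset fun γ hγ => ?_
  rcases lt_or_ge γ.length N with hN | hN
  · exact .inl hN
  · exact .inr (Set.mem_biUnion (x := γ.take N) (List.length_take_of_le hN)
      ⟨γ.drop N, by simpa using hγ, List.take_append_drop N γ⟩)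

theorem eventually_cofinite_append_iff :
    (∀ᶠ α in cofinite, ∀ᶠ η in cofinite, p (α ++ η)) ↔ ∀ᶠ γ in cofinite, p γ := by
  refine ⟨fun h => ?_, fun h => .of_forall (eventually_cofinite_append h)⟩
  obtain ⟨N, hN⟩ := exists_forall_le_length_of_eventually_cofinite h
  exact (eventually_cofinite_iff_forall_length_eq N).2 fun α hα => hN α hα.ge

end Words

theorem wcat_cons_succ (b : Bool) (α : Addr) (w : Cantor) (n : ℕ) :
    wcat (b :: α) w (n + 1) = wcat α w n := by
  simp [wcat]

theorem wcat_append (α η : Addr) (w : Cantor) : wcat (α ++ η) w = wcat α (wcat η w) := by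
  induction α with
  | nil => rfl
  | cons b α ih =>
    funext n
    cases n with
    | zero => rfl
    | succ n => simp only [List.cons_append, wcat_cons_succ, ih]

theorem wcat_nil_ne_wcat_cons (b : Bool) (α : Addr) : wcat [] ≠ wcat (b :: α) := by
  intro h
  have hb : (!b) = b := congrFun (congrFun h fun _ => !b) 0
  exact Bool.not_ne_self b hb

theorem wcat_injective : Function.Injective wcat := by
  intro α
  induction α with
  | nil =>
    rintro (_ | ⟨c, β⟩) h
    · rfl
    · exact absurd h (wcat_nil_ne_wcat_cons c β)
  | cons b α ih =>
    rintro (_ | ⟨c, β⟩) h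
    · exact absurd h.symm (wcat_nil_ne_wcat_cons b α)
    · have hhead : b = c := congrFun (congrFun h fun _ => b) 0
      have htail : wcat α = wcat β := by
        funext w n
        simpa only [wcat_cons_succ] using congrFun (congrFun h w) (n + 1)
      rw [hhead, ih htail]

theorem actsOn.append {g : Equiv.Perm Cantor} {α β : Addr} (h : actsOn g α β) (η : Addr) :
    actsOn g (α ++ η) (β ++ η) := by
  intro w
  rw [wcat_append, wcat_append, h]

theorem actsOn.right_unique {g : Equiv.Perm Cantor} {α β γ : Addr}
    (hβ : actsOn g α β) (hγ : actsOn g α γ) : β = γ :=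
  wcat_injective (funext fun w => (hβ w).symm.trans (hγ w))

theorem actsOn.exists_and_iff {g : Equiv.Perm Cantor} {α β : Addr} (h : actsOn g α β)
    {q : Addr → Prop} : (∃ γ, actsOn g α γ ∧ q γ) ↔ q β :=
  ⟨fun ⟨_, hγ, hq⟩ => h.right_unique hγ ▸ hq, fun hq => ⟨β, h, hq⟩⟩

theorem Coherent.append {r : Addr → Addr → Prop} (hc : Coherent r) {α β : Addr} (h : r α β)
    (η : Addr) : r (α ++ η) (β ++ η) := by
  induction η generalizing α β with
  | nil => simpa only [List.append_nil] using h
  | cons b η ih =>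
    have hb : r (α ++ [b]) (β ++ [b]) := by
      cases b
      exacts [(hc α β h).1, (hc α β h).2]
    simpa only [List.append_assoc, List.singleton_append] using ih hb

section ApproxRel

open Filter

variable {r : Addr → Addr → Prop} {α β : Addr} {g : Equiv.Perm Cantor}

theorem approxRel_iff_eventually :
    approxRel r α β ↔ ∀ᶠ η in cofinite, r (α ++ η) (β ++ η) := Iff.rfl

theorem equivalence_approxRel (hr : Equivalence r) : Equivalence (approxRel r) where
  refl _ := approxRel_iff_eventually.2 (.of_forall fun _ => hr.refl _)
  symm h := (approxRel_iff_eventually.1 h).mono fun _ => hr.symm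
  trans h h' := by
    filter_upwards [approxRel_iff_eventually.1 h, approxRel_iff_eventually.1 h'] with η hη hη'
    exact hr.trans hη hη'

theorem approxRel_iff_forall_append_singleton :
    approxRel r α β ↔ ∀ b, approxRel r (α ++ [b]) (β ++ [b]) := by
  simp only [approxRel_iff_eventually, List.append_assoc]
  rw [eventually_cofinite_iff_forall_length_eq 1]
  simp only [List.length_eq_one_iff, forall_exists_index, forall_eq_apply_imp_iff]

theorem coherent_approxRel (r : Addr → Addr → Prop) : Coherent (approxRel r) :=
  fun _ _ h => Bool.forall_bool.1 (approxRel_iff_forall_append_singleton.1 h)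

theorem reduced_approxRel (r : Addr → Addr → Prop) : Reduced (approxRel r) :=
  fun _ _ h₀ h₁ => approxRel_iff_forall_append_singleton.2 (Bool.forall_bool.2 ⟨h₀, h₁⟩)

theorem Coherent.approxRel_of_rel (hc : Coherent r) (h : r α β) : approxRel r α β :=
  approxRel_iff_eventually.2 (.of_forall (hc.append h))

theorem actsOn.approxRel_iff (h : actsOn g α β) :
    approxRel r α β ↔ ∀ᶠ η in cofinite, ∃ γ, actsOn g (α ++ η) γ ∧ r (α ++ η) γ := by
  simp only [(h.append _).exists_and_iff, approxRel_iff_eventually]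

theorem fixesParts_iff_eventually :
    FixesParts r g ↔ ∀ᶠ α in cofinite, ∃ β, actsOn g α β ∧ r α β := Iff.rfl

theorem fixesParts_approxRel_iff : FixesParts (approxRel r) g ↔ FixesParts r g := by
  simp only [fixesParts_iff_eventually]
  constructor
  · intro h
    refine eventually_cofinite_append_iff.1 (h.mono ?_)
    rintro α ⟨β, hβ, hαβ⟩
    exact hβ.approxRel_iff.1 hαβ
  · intro h
    refine h.mp ((eventually_cofinite_append_iff.2 h).mono ?_)
    rintro α hα ⟨β, hβ, -⟩
    exact ⟨β, hβ, hβ.approxRel_iff.2 hα⟩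

theorem Stabilizes.stabilizes_approxRel (h : Stabilizes r g) : Stabilizes (approxRel r) g := by
  obtain ⟨S, hcof, hdef, hS⟩ := h
  have hev : ∀ᶠ γ in cofinite, γ ∈ S := hcof
  refine ⟨S, hcof, hdef, fun α _ α' _ β β' hβ hβ' => ?_⟩
  rw [approxRel_iff_eventually, approxRel_iff_eventually]
  refine eventually_congr ?_
  filter_upwards [eventually_cofinite_append hev α, eventually_cofinite_append hev α']
    with η hη hη'
  exact hS _ hη _ hη' _ _ (hβ.append η) (hβ'.append η)

theorem fixSet_approxRel (r : Addr → Addr → Prop) : FixSet (approxRel r) = FixSet r :=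
  Set.ext fun _ => and_congr_right fun _ => fixesParts_approxRel_iff

theorem stabSet_subset_stabSet_approxRel (r : Addr → Addr → Prop) :
    StabSet r ⊆ StabSet (approxRel r) :=
  fun _ hg => ⟨hg.1, hg.2.stabilizes_approxRel⟩

end ApproxRel

/-- For an equivalence relation `∼` on `Ω`, the relation `≈` defined
by `α ≈ β ↔ αη ∼ βη` for all but finitely many `η` is a coherent and reduced
equivalence relation; if `∼` is coherent then `∼`-equivalent addresses are
`≈`-equivalent; and, for the resulting type system `𝒬`, `Fix_V(𝒬) = Fix_V(𝒫)` and
`Stab_V(𝒫) ≤ Stab_V(𝒬)`. -/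
theorem approxRel_typeSystem_and_subgroups (r : Addr → Addr → Prop)
    (hr : Equivalence r) :
    Equivalence (approxRel r) ∧ Coherent (approxRel r) ∧ Reduced (approxRel r) ∧
    (Coherent r → ∀ α β, r α β → approxRel r α β) ∧
    FixSet (approxRel r) = FixSet r ∧ StabSet r ⊆ StabSet (approxRel r) := by
  exact ⟨equivalence_approxRel hr, coherent_approxRel r, reduced_approxRel r,
    fun hc _ _ => hc.approxRel_of_rel, fixSet_approxRel r, stabSet_subset_stabSet_approxRel r⟩
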